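/- Fix real α, β > −1, j ∈ ℕ, γ ∈ ℝ, M > 0, and a sequence M_n ≥ 0 with lim_{n→∞} M_n n^γ = M. If γ > 2(α+2j+1), then lim_{n→∞} Q_n(1 − z²/(2n²))/n^α = g_α(z), uniformly on compact subsets of ℂ (Q_n is a polynomial with real coefficients, evaluated at the complex argument 1 − z²/(2n²)). -/

import Mathlib

open Polynomial Filter

/-- The Jacobi polynomial `P_n^{(α,β)}` as a real polynomial. -/
noncomputable def jacobiP (α β : ℝ) (n : ℕ) : Polynomial ℝ :=
  ∑ k ∈ Finset.range (n + 1),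
    Polynomial.C (Real.Gamma (n + α + 1) / (Real.Gamma ((n : ℝ) - k + 1) * Real.Gamma (α + k + 1)) *
        (Real.Gamma (n + β + 1) / (Real.Gamma ((k : ℝ) + 1) * Real.Gamma ((n : ℝ) - k + β + 1)))) *
      (Polynomial.C (2⁻¹ : ℝ) * (Polynomial.X - 1)) ^ k *
      (Polynomial.C (2⁻¹ : ℝ) * (Polynomial.X + 1)) ^ (n - k)

/-- The squared Jacobi norm `‖P_n^{(α,β)}‖²`. -/
noncomputable def jacobiNormSq (α β : ℝ) (n : ℕ) : ℝ :=
  ∫ x in (-1 : ℝ)..1, (jacobiP α β n).eval x ^ 2 * (1 - x) ^ α * (1 + x) ^ β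

/-- The kernel `K_n^{(j,k)}(x,y)`. -/
noncomputable def kernK (α β : ℝ) (j k n : ℕ) (x y : ℝ) : ℝ :=
  ∑ i ∈ Finset.range (n + 1),
    (Polynomial.derivative^[j] (jacobiP α β i)).eval x *
      (Polynomial.derivative^[k] (jacobiP α β i)).eval y / jacobiNormSq α β i

/-- The kernel `K_n^{(j,0)}(1,·)` as a polynomial. -/
noncomputable def kernKPoly (α β : ℝ) (j n : ℕ) : Polynomial ℝ :=
  ∑ i ∈ Finset.range (n + 1),
    Polynomial.C ((Polynomial.derivative^[j] (jacobiP α β i)).eval 1 / jacobiNormSq α β i) *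
      jacobiP α β i

/-- The varying Sobolev inner product `(f,g)_{S,n}` with mass `m`. -/
noncomputable def sobInner (α β : ℝ) (j : ℕ) (m : ℝ) (f g : Polynomial ℝ) : ℝ :=
  (∫ x in (-1 : ℝ)..1, f.eval x * g.eval x * (1 - x) ^ α * (1 + x) ^ β) +
    m * (Polynomial.derivative^[j] f).eval 1 * (Polynomial.derivative^[j] g).eval 1

/-- The Jacobi–Sobolev orthogonal polynomial `Q_n`. -/
noncomputable def sobQ (α β : ℝ) (j : ℕ) (Ms : ℕ → ℝ) (n : ℕ) : Polynomial ℝ :=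
  jacobiP α β n -
    Polynomial.C (Ms n * (Polynomial.derivative^[j] (jacobiP α β n)).eval 1 /
        (1 + Ms n * kernK α β j j (n - 1) 1 1)) *
      kernKPoly α β j (n - 1)

/-- The entire function `g_ν(z) = ∑ (-1)^k (z/2)^{2k}/(k! Γ(k+ν+1))`, so that
`J_ν(x) = (x/2)^ν g_ν(x)`. -/
noncomputable def besselG (ν : ℝ) (z : ℂ) : ℂ :=
  ∑' k : ℕ, (-1) ^ k / ((Nat.factorial k : ℂ) * Complex.Gamma ((k : ℂ) + (ν : ℂ) + 1)) *
    (z / 2) ^ (2 * k)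

/-!
Writing `x = 1 - 2 w`, the defining sum of `P_n^{(α,β)}` runs over `(-w) ^ k * (1 - w) ^ (n - k)`
with coefficients asymptotic to `n ^ (α + 2 k) / (k! Γ(α + k + 1))`. When `n ^ 2 * w` tends to
`(z / 2) ^ 2`, dominated convergence gives the classical Mehler–Heine limit. The same dominating
series, through Cauchy's estimates on a circle of radius of order `n ^ (-2)` around `1`, gives
`(P_n^{(α,β)})^{(j)}(1) = O(n ^ (α + 2 j))`. The squared norms are of exact order `1 / n`: in terms
of Beta integrals, orthogonality is the vanishing of `n`-th differences of polynomials of degree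
less than `n`, and the leading coefficient is a Chu–Vandermonde sum. Summing over the degree yields
`K_{n-1}^{(j,j)}(1,1) = O(n ^ (2 α + 4 j + 2))` and `K_{n-1}^{(j,0)}(1,x) = O(n ^ (2 α + 2 j + 2))`,
so the correction in `Q_n` is `n ^ α * O(M_n * n ^ (2 α + 4 j + 2))`, which is `o(n ^ α)`. All
limits are taken jointly in `n` and `z`, and joint convergence at every point is locally uniform
convergence.
-/

open scoped Topology

section ContinuousConvergence

variable {ι X Y : Type*} [TopologicalSpace X] [UniformSpace Y] {p : Filter ι} [p.NeBot]
  {F : ι → X → Y} {f : X → Y}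

theorem continuous_of_forall_tendsto_prod_nhds
    (h : ∀ x, Tendsto (fun q : ι × X => F q.1 q.2) (p ×ˢ 𝓝 x) (𝓝 (f x))) : Continuous f := by
  refine continuous_iff_continuousAt.2 fun x => (closed_nhds_basis (f x)).tendsto_right_iff.2 ?_
  rintro s ⟨hs, hs_closed⟩
  have hev : ∀ᶠ y in 𝓝 x, ∀ᶠ i in p, F i y ∈ s :=
    (eventually_swap_iff.1 ((h x).eventually hs)).curry
  filter_upwards [hev] with y hy
  exact hs_closed.mem_of_tendsto ((h y).comp (tendsto_id.prodMk tendsto_const_nhds)) hy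

theorem tendstoLocallyUniformly_of_forall_tendsto_prod_nhds
    (h : ∀ x, Tendsto (fun q : ι × X => F q.1 q.2) (p ×ˢ 𝓝 x) (𝓝 (f x))) :
    TendstoLocallyUniformly F f p := by
  refine tendstoLocallyUniformly_iff_forall_tendsto.2 fun x => ?_
  have hf : Tendsto (fun q : ι × X => f q.2) (p ×ˢ 𝓝 x) (𝓝 (f x)) :=
    ((continuous_of_forall_tendsto_prod_nhds h).tendsto x).comp tendsto_snd
  exact (hf.prodMk_nhds (h x)).mono_right (nhds_le_uniformity (f x))

end ContinuousConvergence

section PowerAsymptotics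

theorem isEquivalent_natCast_add_one_rpow (s : ℝ) :
    Asymptotics.IsEquivalent atTop (fun n : ℕ => ((n : ℝ) + 1) ^ s) fun n => (n : ℝ) ^ s := by
  refine (Asymptotics.isEquivalent_of_tendsto_one ?_).symm
  have h : Tendsto (fun n : ℕ => ((n : ℝ) / (n + 1)) ^ s) atTop (𝓝 1) := by
    simpa using (tendsto_natCast_div_add_atTop (1 : ℝ)).rpow_const (p := s) (Or.inl one_ne_zero)
  exact h.congr fun n => Real.div_rpow n.cast_nonneg (by positivity) s

theorem exists_forall_norm_le_of_isBigO_rpow {E : Type*} [NormedAddCommGroup E] {f : ℕ → E} {s : ℝ}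
    (hf : f =O[atTop] fun n => (n : ℝ) ^ s) :
    ∃ C, 0 < C ∧ ∀ n : ℕ, ‖f n‖ ≤ C * ((n : ℝ) + 1) ^ s := by
  obtain ⟨C, hC, hle⟩ := Asymptotics.bound_of_isBigO_nat_atTop
    (hf.trans (isEquivalent_natCast_add_one_rpow s).symm.isBigO)
  refine ⟨C, hC, fun n => ?_⟩
  have hn : 0 < ((n : ℝ) + 1) ^ s := by positivity
  simpa only [Real.norm_of_nonneg hn.le] using hle hn.ne'

theorem mul_rpow_le_add_one_rpow_sub_rpow {s x : ℝ} (hs : -1 < s) (hx : 0 ≤ x) :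
    min 1 (s + 1) * (x + 1) ^ s ≤ (x + 1) ^ (s + 1) - x ^ (s + 1) := by
  have hx1 : 0 < x + 1 := by positivity
  have hs1 : 0 < s + 1 := by linarith
  rcases le_total 0 s with h0 | h0
  · have hpow : x ^ s ≤ (x + 1) ^ s := by gcongr; linarith
    rw [min_eq_left (by linarith), Real.rpow_add_one hx1.ne', Real.rpow_add_one' hx hs1.ne']
    nlinarith
  · have bernoulli : (1 + -1 / (x + 1)) ^ (s + 1) ≤ 1 + (s + 1) * (-1 / (x + 1)) :=
      rpow_one_add_le_one_add_mul_self (by rw [le_div_iff₀ hx1]; linarith) hs1.le (by linarith)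
    rw [show 1 + -1 / (x + 1) = x / (x + 1) by field_simp; ring, Real.div_rpow hx hx1.le,
      div_le_iff₀ (by positivity)] at bernoulli
    rw [min_eq_right (by linarith)]
    have expand : (1 + (s + 1) * (-1 / (x + 1))) * (x + 1) ^ (s + 1) =
        (x + 1) ^ (s + 1) - (s + 1) * (x + 1) ^ s := by
      rw [Real.rpow_add_one hx1.ne']
      field_simp
      ring
    linarith

theorem exists_sum_range_add_one_rpow_le {s : ℝ} (hs : -1 < s) :
    ∃ C, 0 < C ∧ ∀ n : ℕ, ∑ i ∈ Finset.range n, ((i : ℝ) + 1) ^ s ≤ C * (n : ℝ) ^ (s + 1) := by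
  have hm : 0 < min 1 (s + 1) := lt_min one_pos (by linarith)
  refine ⟨(min 1 (s + 1))⁻¹, inv_pos.2 hm, fun n => ?_⟩
  rw [← div_eq_inv_mul, le_div_iff₀' hm, Finset.mul_sum]
  calc ∑ i ∈ Finset.range n, min 1 (s + 1) * ((i : ℝ) + 1) ^ s
      ≤ ∑ i ∈ Finset.range n, (((i + 1 : ℕ) : ℝ) ^ (s + 1) - (i : ℝ) ^ (s + 1)) := by
        refine Finset.sum_le_sum fun i _ => ?_
        rw [Nat.cast_succ]
        exact mul_rpow_le_add_one_rpow_sub_rpow hs i.cast_nonneg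
    _ = (n : ℝ) ^ (s + 1) := by
        rw [Finset.sum_range_sub fun i : ℕ => (i : ℝ) ^ (s + 1), Nat.cast_zero,
          Real.zero_rpow (by linarith), sub_zero]

theorem tendsto_mul_rpow_of_lt {u : ℕ → ℝ} {γ δ M : ℝ}
    (hu : Tendsto (fun n : ℕ => u n * (n : ℝ) ^ γ) atTop (𝓝 M)) (hδ : δ < γ) :
    Tendsto (fun n : ℕ => u n * (n : ℝ) ^ δ) atTop (𝓝 0) := by
  have hdecay : Tendsto (fun n : ℕ => (n : ℝ) ^ (-(γ - δ))) atTop (𝓝 0) :=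
    (tendsto_rpow_neg_atTop (sub_pos.2 hδ)).comp tendsto_natCast_atTop_atTop
  rw [← mul_zero M]
  refine (hu.mul hdecay).congr' ?_
  filter_upwards [eventually_gt_atTop 0] with n hn
  rw [mul_assoc, ← Real.rpow_add (by exact_mod_cast hn), neg_sub, add_sub_cancel]

end PowerAsymptotics

section Gamma

theorem realGamma_add_natCast {x : ℝ} (hx : 0 < x) (m : ℕ) :
    Real.Gamma (x + m) = (ascPochhammer ℝ m).eval x * Real.Gamma x := by
  induction m with
  | zero => simp
  | succ m ih =>
    rw [Nat.cast_succ, ← add_assoc, Real.Gamma_add_one (by positivity), ih, ascPochhammer_succ_eval]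
    ring

theorem realGamma_add_natCast_le {x : ℝ} (hx : 0 < x) (m : ℕ) :
    Real.Gamma (x + m) ≤ (x + m) ^ m * Real.Gamma x := by
  induction m with
  | zero => simp
  | succ m ih =>
    rw [Nat.cast_succ, ← add_assoc, Real.Gamma_add_one (by positivity)]
    calc (x + m) * Real.Gamma (x + m) ≤ (x + m) * ((x + m) ^ m * Real.Gamma x) := by gcongr
      _ = (x + m) ^ (m + 1) * Real.Gamma x := by ring
      _ ≤ (x + m + 1) ^ (m + 1) * Real.Gamma x := by
        gcongr ?_ ^ _ * _
        linarith

theorem exists_pos_forall_le_realGamma : ∃ c, 0 < c ∧ ∀ x, 0 < x → c ≤ Real.Gamma x := by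
  obtain ⟨x₀, hx₀, hmin⟩ := Real.exists_isMinOn_Gamma_Ioi
  exact ⟨Real.Gamma x₀, Real.Gamma_pos_of_pos (by linarith [hx₀.1]), fun x hx => hmin hx⟩

theorem ringChoose_eq_Gamma_div {x : ℝ} {k : ℕ} (hx : 0 < x - k + 1) :
    Ring.choose x k = Real.Gamma (x + 1) / (k.factorial * Real.Gamma (x - k + 1)) := by
  have hΓ : Real.Gamma (x + 1) =
      (ascPochhammer ℝ k).eval (x - k + 1) * Real.Gamma (x - k + 1) := by
    rw [← realGamma_add_natCast hx]
    congr 1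
    ring
  have hchoose : (k.factorial : ℝ) * Ring.choose x k = (ascPochhammer ℝ k).eval (x - k + 1) := by
    rw [← nsmul_eq_mul, Ring.choose, Ring.factorial_nsmul_multichoose_eq_ascPochhammer,
      ascPochhammer_smeval_eq_eval]
  have := (Real.Gamma_pos_of_pos hx).ne'
  rw [hΓ, ← hchoose]
  field_simp

theorem isEquivalent_natCast_add_const (c : ℝ) :
    Asymptotics.IsEquivalent atTop (fun n : ℕ => (n : ℝ) + c) fun n => (n : ℝ) :=
  (Asymptotics.isEquivalent_of_tendsto_one (tendsto_natCast_div_add_atTop c)).symm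

theorem isEquivalent_Gamma_natCast_add_of_pos {s : ℝ} (hs : 0 < s) :
    Asymptotics.IsEquivalent atTop (fun n : ℕ => Real.Gamma (n + s + 1))
      fun n => n.factorial * (n : ℝ) ^ s := by
  have hΓ : 0 < Real.Gamma s := Real.Gamma_pos_of_pos hs
  have hprod : ∀ n : ℕ, Real.Gamma s * ∏ i ∈ Finset.range (n + 1), (s + i) =
      Real.Gamma (n + s + 1) := fun n => by
    induction n with
    | zero => simp [Real.Gamma_add_one hs.ne', mul_comm]
    | succ n ih =>
      rw [show ((n + 1 : ℕ) : ℝ) + s + 1 = (n + s + 1) + 1 by push_cast; ring,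
        Real.Gamma_add_one (by positivity), ← ih, Finset.prod_range_succ _ (n + 1)]
      push_cast
      ring
  have hlim := (Real.GammaSeq_tendsto_Gamma s).div_const (Real.Gamma s)
  rw [div_self hΓ.ne'] at hlim
  refine (Asymptotics.isEquivalent_of_tendsto_one (hlim.congr fun n => ?_)).symm
  rw [Pi.div_apply, ← hprod, Real.GammaSeq, div_div, mul_comm ((n : ℝ) ^ s), mul_comm (∏ i ∈ _, _)]

theorem isEquivalent_Gamma_natCast_add (s : ℝ) :
    Asymptotics.IsEquivalent atTop (fun n : ℕ => Real.Gamma (n + s + 1))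
      fun n => n.factorial * (n : ℝ) ^ s := by
  obtain ⟨m, hm⟩ := exists_nat_gt (-s)
  induction m generalizing s with
  | zero => exact isEquivalent_Gamma_natCast_add_of_pos (by simpa using hm)
  | succ m ih =>
    have hshift := (ih (s + 1) (by push_cast at hm; linarith)).div
      (isEquivalent_natCast_add_const (s + 1))
    refine (hshift.congr_left ?_).congr_right ?_
    · filter_upwards [eventually_gt_atTop (m + 1)] with n hn
      have hn' : (m : ℝ) + 1 < n := by exact_mod_cast hn
      push_cast at hm
      have hpos : 0 < n + s + 1 := by linarith
      rw [Pi.div_apply, ← add_assoc, Real.Gamma_add_one hpos.ne', mul_div_cancel_left₀ _ hpos.ne']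
    · filter_upwards [eventually_gt_atTop 0] with n hn
      have hn' : (0 : ℝ) < n := by exact_mod_cast hn
      rw [Pi.div_apply, Real.rpow_add_one hn'.ne', ← mul_assoc, mul_div_cancel_right₀ _ hn'.ne']

theorem exists_Gamma_natCast_add_le (s : ℝ) :
    ∃ C, 0 < C ∧ ∀ n : ℕ, Real.Gamma (n + s + 1) ≤ C * ((n : ℝ) + 1) ^ s * n.factorial := by
  have hdiv : (fun n : ℕ => Real.Gamma (n + s + 1) / n.factorial) =O[atTop]
      fun n => (n : ℝ) ^ s :=
    ((isEquivalent_Gamma_natCast_add s).div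
      (.refl (u := fun n : ℕ => (n.factorial : ℝ)))).isBigO.trans_eventuallyEq
        (.of_forall fun n => mul_div_cancel_left₀ _ (by positivity))
  obtain ⟨C, hC, hle⟩ := exists_forall_norm_le_of_isBigO_rpow hdiv
  exact ⟨C, hC, fun n => (div_le_iff₀ (by positivity)).1 ((Real.le_norm_self _).trans (hle n))⟩

end Gamma

section JacobiCoefficients

variable {α β : ℝ}

/-- The coefficient of `((x - 1) / 2) ^ k * ((x + 1) / 2) ^ (n - k)` in `P_n^{(α,β)}(x)`. -/
noncomputable def jacobiCoeff (α β : ℝ) (n k : ℕ) : ℝ :=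
  Real.Gamma (n + α + 1) / (Real.Gamma ((n : ℝ) - k + 1) * Real.Gamma (α + k + 1)) *
    (Real.Gamma (n + β + 1) / (Real.Gamma ((k : ℝ) + 1) * Real.Gamma ((n : ℝ) - k + β + 1)))

theorem aeval_one_sub_two_mul_jacobiP {A : Type*} [CommRing A] [Algebra ℝ A] (n : ℕ) (w : A) :
    aeval (1 - 2 * w) (jacobiP α β n) =
      ∑ k ∈ Finset.range (n + 1), jacobiCoeff α β n k • ((-w) ^ k * (1 - w) ^ (n - k)) := by
  have half : algebraMap ℝ A 2⁻¹ * 2 = 1 := by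
    rw [← map_ofNat (algebraMap ℝ A) 2, ← map_mul, inv_mul_cancel₀ two_ne_zero, map_one]
  have hsub : algebraMap ℝ A 2⁻¹ * (1 - 2 * w - 1) = -w := by linear_combination -w * half
  have hadd : algebraMap ℝ A 2⁻¹ * (1 - 2 * w + 1) = 1 - w := by
    linear_combination (1 - w) * half
  simp only [jacobiP, map_sum, map_mul, map_pow, map_sub, map_add, aeval_C, aeval_X, map_one, hsub,
    hadd, ← jacobiCoeff.eq_def, Algebra.smul_def, mul_assoc]

theorem jacobiCoeff_eq_choose_mul_choose (hα : -1 < α) (hβ : -1 < β) {n k : ℕ} (hk : k ≤ n) :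
    jacobiCoeff α β n k = Ring.choose ((n : ℝ) + β) k * Ring.choose ((n : ℝ) + α) (n - k) := by
  have hk' : (k : ℝ) ≤ n := by exact_mod_cast hk
  rw [ringChoose_eq_Gamma_div (by linarith),
    ringChoose_eq_Gamma_div (by push_cast [hk]; linarith), jacobiCoeff,
    ← Nat.cast_sub hk, Real.Gamma_nat_eq_factorial, Real.Gamma_nat_eq_factorial,
    Nat.cast_sub hk, show (n : ℝ) + α - (n - k) + 1 = α + k + 1 by ring,
    show (n : ℝ) + β - k + 1 = n - k + β + 1 by ring]
  ring

theorem sum_range_jacobiCoeff (hα : -1 < α) (hβ : -1 < β) {n : ℕ} (hn : 1 ≤ n) :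
    ∑ k ∈ Finset.range (n + 1), jacobiCoeff α β n k =
      Real.Gamma (2 * n + α + β + 1) / (n.factorial * Real.Gamma (n + α + β + 1)) := by
  have hn' : (1 : ℝ) ≤ n := by exact_mod_cast hn
  calc ∑ k ∈ Finset.range (n + 1), jacobiCoeff α β n k
      = ∑ k ∈ Finset.range (n + 1),
          Ring.choose ((n : ℝ) + β) k * Ring.choose ((n : ℝ) + α) (n - k) :=
        Finset.sum_congr rfl fun k hk =>
          jacobiCoeff_eq_choose_mul_choose hα hβ (Finset.mem_range_succ_iff.1 hk)
    _ = Ring.choose ((n : ℝ) + β + (n + α)) n := by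
        rw [Ring.add_choose_eq n (Commute.all _ _), Finset.Nat.sum_antidiagonal_eq_sum_range_succ
          fun i j => Ring.choose ((n : ℝ) + β) i * Ring.choose ((n : ℝ) + α) j]
    _ = _ := by
        rw [ringChoose_eq_Gamma_div (by linarith)]
        congr 3 <;> ring

theorem tendsto_jacobiCoeff_div_rpow (α β : ℝ) (k : ℕ) :
    Tendsto (fun n : ℕ => jacobiCoeff α β n k / (n : ℝ) ^ (α + 2 * k)) atTop
      (𝓝 (1 / (k.factorial * Real.Gamma (α + k + 1)))) := by
  have hequiv := (((isEquivalent_Gamma_natCast_add α).div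
      ((isEquivalent_Gamma_natCast_add (-k)).mul
        (Asymptotics.IsEquivalent.refl (u := fun _ => Real.Gamma (α + k + 1))))).mul
      ((isEquivalent_Gamma_natCast_add β).div
        ((Asymptotics.IsEquivalent.refl (u := fun _ => Real.Gamma (k + 1))).mul
          (isEquivalent_Gamma_natCast_add (β - k))))).div
      (Asymptotics.IsEquivalent.refl (u := fun n : ℕ => (n : ℝ) ^ (α + 2 * k)))
  refine (hequiv.symm.tendsto_nhds (tendsto_const_nhds.congr' ?_)).congr fun n => ?_
  · filter_upwards [eventually_gt_atTop 0] with n hn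
    have hn' : (0 : ℝ) < n := by exact_mod_cast hn
    have hfact : (n.factorial : ℝ) ≠ 0 := by positivity
    have hpow := fun s : ℝ => (Real.rpow_pos_of_pos hn' s).ne'
    have hα := hpow α
    have hβ := hpow β
    have hk := hpow k
    simp only [Pi.div_apply, Pi.mul_apply, two_mul, Real.rpow_add hn', Real.rpow_sub hn',
      Real.rpow_neg hn'.le, Real.Gamma_nat_eq_factorial]
    field_simp
  · simp only [Pi.div_apply, Pi.mul_apply, jacobiCoeff, add_sub_right_comm _ β, ← sub_eq_add_neg,
      ← add_sub_assoc]

theorem exists_Gamma_div_Gamma_mul_Gamma_le (hα : -1 < α) :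
    ∃ A, 0 < A ∧ ∀ n k : ℕ, k ≤ n →
      Real.Gamma (n + α + 1) / (Real.Gamma ((n : ℝ) - k + 1) * Real.Gamma (α + k + 1)) ≤
        A * ((n : ℝ) + 1) ^ α * ((n : ℝ) + 1) ^ k := by
  obtain ⟨C, hC, hΓ_le⟩ := exists_Gamma_natCast_add_le α
  obtain ⟨c, hc, hle_Γ⟩ := exists_pos_forall_le_realGamma
  refine ⟨C / c, by positivity, fun n k hk => ?_⟩
  have hnk : (0 : ℝ) < n - k + 1 := by linarith [(Nat.cast_le (α := ℝ)).2 hk]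
  have hαk : 0 < α + k + 1 := by linarith [k.cast_nonneg (α := ℝ)]
  have hfact : (n.factorial : ℝ) ≤ (n + 1) ^ k * Real.Gamma (n - k + 1) := by
    rw [← Real.Gamma_nat_eq_factorial, show (n : ℝ) + 1 = n - k + 1 + k by ring]
    exact realGamma_add_natCast_le hnk k
  rw [div_le_iff₀ (by positivity)]
  calc Real.Gamma (n + α + 1)
      ≤ C * (n + 1) ^ α * ((n + 1) ^ k * Real.Gamma (n - k + 1)) := (hΓ_le n).trans (by gcongr)
    _ = C / c * (n + 1) ^ α * (n + 1) ^ k * (Real.Gamma (n - k + 1) * c) := by field_simp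
    _ ≤ C / c * (n + 1) ^ α * (n + 1) ^ k * (Real.Gamma (n - k + 1) * Real.Gamma (α + k + 1)) := by
      gcongr
      exact hle_Γ _ hαk

theorem Gamma_div_Gamma_mul_Gamma_le (hβ : -1 < β) {n k : ℕ} (hk : k ≤ n) :
    Real.Gamma (n + β + 1) / (Real.Gamma ((k : ℝ) + 1) * Real.Gamma ((n : ℝ) - k + β + 1)) ≤
      ((1 + |β|) * ((n : ℝ) + 1)) ^ k / k.factorial := by
  have hnkβ : (0 : ℝ) < n - k + β + 1 := by linarith [(Nat.cast_le (α := ℝ)).2 hk]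
  have hnβ : (0 : ℝ) ≤ n + β + 1 := by linarith [k.cast_nonneg (α := ℝ)]
  have hbase : n + β + 1 ≤ (1 + |β|) * (n + 1) := by
    nlinarith [le_abs_self β, mul_nonneg (abs_nonneg β) n.cast_nonneg]
  have hle : Real.Gamma (n + β + 1) ≤ (n + β + 1) ^ k * Real.Gamma (n - k + β + 1) := by
    rw [show n + β + 1 = n - k + β + 1 + k by ring]
    exact realGamma_add_natCast_le hnkβ k
  rw [Real.Gamma_nat_eq_factorial, ← div_div, div_right_comm]
  gcongr
  rw [div_le_iff₀ (Real.Gamma_pos_of_pos hnkβ)]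
  exact hle.trans (by gcongr)

theorem exists_abs_jacobiCoeff_le (hα : -1 < α) (hβ : -1 < β) :
    ∃ A, 0 < A ∧ ∀ n k : ℕ, k ≤ n → |jacobiCoeff α β n k| ≤
      A * ((n : ℝ) + 1) ^ α * (((1 + |β|) * ((n : ℝ) + 1) ^ 2) ^ k / k.factorial) := by
  obtain ⟨A, hA, hle⟩ := exists_Gamma_div_Gamma_mul_Gamma_le hα
  refine ⟨A, hA, fun n k hk => ?_⟩
  have hk' : (k : ℝ) ≤ n := by exact_mod_cast hk
  have hΓα : 0 < Real.Gamma (n + α + 1) := Real.Gamma_pos_of_pos (by linarith)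
  have hΓβ : 0 < Real.Gamma (n + β + 1) := Real.Gamma_pos_of_pos (by linarith)
  have hΓnkβ : 0 < Real.Gamma (n - k + β + 1) := Real.Gamma_pos_of_pos (by linarith)
  have hΓαk : 0 < Real.Gamma (α + k + 1) := Real.Gamma_pos_of_pos (by linarith)
  rw [jacobiCoeff, abs_of_pos (by positivity)]
  refine (mul_le_mul (hle n k hk) (Gamma_div_Gamma_mul_Gamma_le hβ hk) (by positivity)
    (by positivity)).trans_eq ?_
  simp only [sq, mul_pow]
  ring

end JacobiCoefficients

section FiniteDifferences

theorem sum_neg_one_pow_div_factorial_mul_eval {P : ℝ[X]} {n : ℕ} (hP : P.natDegree ≤ n) :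
    ∑ k ∈ Finset.range (n + 1), (-1 : ℝ) ^ k / (k.factorial * (n - k).factorial) * P.eval (k : ℝ) =
      (-1) ^ n * P.coeff n := by
  have hdiff : (fwdDiff (1 : ℝ))^[n] P.eval 0 = P.coeff n * n.factorial := by
    rcases hP.lt_or_eq with hlt | rfl
    · rw [fwdDiff_iter_eq_zero_of_degree_lt hlt, coeff_eq_zero_of_natDegree_lt hlt, zero_mul,
        Pi.zero_apply]
    · rw [fwdDiff_iter_degree_eq_factorial, Pi.smul_apply, Pi.natCast_apply, smul_eq_mul,
        leadingCoeff]
  have hfact : (n.factorial : ℝ) ≠ 0 := by positivity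
  rw [← mul_div_cancel_right₀ (P.coeff n) hfact, ← hdiff, fwdDiff_iter_eq_sum_shift,
    Finset.sum_div, Finset.mul_sum]
  refine Finset.sum_congr rfl fun k hk => ?_
  have hk' : k ≤ n := Finset.mem_range_succ_iff.1 hk
  have hsign : (-1 : ℝ) ^ n * (-1) ^ (n - k) = (-1) ^ k := by
    obtain ⟨d, rfl⟩ := Nat.exists_eq_add_of_le hk'
    rw [Nat.add_sub_cancel_left, pow_add, mul_assoc, ← mul_pow]
    norm_num
  rw [← hsign, zero_add, nsmul_one, zsmul_eq_mul]
  push_cast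
  rw [Nat.cast_choose ℝ hk']
  field_simp

end FiniteDifferences

section BetaIntegral

variable {a b : ℝ}

theorem ofReal_rpow_mul_one_sub_rpow {t : ℝ} (ht : t ∈ Set.Icc (0 : ℝ) 1) :
    ((t ^ a * (1 - t) ^ b : ℝ) : ℂ) =
      (t : ℂ) ^ (((a + 1 : ℝ) : ℂ) - 1) * (1 - (t : ℂ)) ^ (((b + 1 : ℝ) : ℂ) - 1) := by
  rw [Complex.ofReal_mul, Complex.ofReal_cpow ht.1, Complex.ofReal_cpow (sub_nonneg.2 ht.2)]
  push_cast
  simp only [add_sub_cancel_right]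

theorem intervalIntegrable_rpow_mul_one_sub_rpow (ha : -1 < a) (hb : -1 < b) :
    IntervalIntegrable (fun t : ℝ => t ^ a * (1 - t) ^ b) MeasureTheory.volume 0 1 := by
  have hconv := Complex.betaIntegral_convergent (u := (a + 1 : ℝ)) (v := (b + 1 : ℝ))
    (by rw [Complex.ofReal_re]; linarith) (by rw [Complex.ofReal_re]; linarith)
  rw [intervalIntegrable_iff_integrableOn_Icc_of_le zero_le_one] at hconv ⊢
  refine MeasureTheory.IntegrableOn.congr_fun (MeasureTheory.Integrable.re hconv) (fun t ht => ?_)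
    measurableSet_Icc
  simp only [← ofReal_rpow_mul_one_sub_rpow ht, RCLike.re_to_complex, Complex.ofReal_re]

theorem integral_rpow_mul_one_sub_rpow (ha : -1 < a) (hb : -1 < b) :
    ∫ t in (0 : ℝ)..1, t ^ a * (1 - t) ^ b =
      Real.Gamma (a + 1) * Real.Gamma (b + 1) / Real.Gamma (a + b + 2) := by
  have hbeta := Complex.betaIntegral_eq_Gamma_mul_div (a + 1 : ℝ) (b + 1 : ℝ)
    (by rw [Complex.ofReal_re]; linarith) (by rw [Complex.ofReal_re]; linarith)
  rw [Complex.betaIntegral, intervalIntegral.integral_congr fun t ht =>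
      (ofReal_rpow_mul_one_sub_rpow (Set.uIcc_of_le (zero_le_one (α := ℝ)) ▸ ht)).symm,
    intervalIntegral.integral_ofReal, ← Complex.ofReal_add, Complex.Gamma_ofReal,
    Complex.Gamma_ofReal, Complex.Gamma_ofReal] at hbeta
  rw [show a + b + 2 = a + 1 + (b + 1) by ring]
  exact_mod_cast hbeta

theorem intervalIntegrable_eval_mul_rpow (ha : -1 < a) (hb : -1 < b) (p : ℝ[X]) :
    IntervalIntegrable (fun t : ℝ => p.eval t * (t ^ a * (1 - t) ^ b)) MeasureTheory.volume 0 1 :=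
  (intervalIntegrable_rpow_mul_one_sub_rpow ha hb).continuousOn_mul p.continuous.continuousOn

/-- Integration of polynomials over `[0, 1]` against the Beta weight `t ^ a * (1 - t) ^ b`, the
Jacobi weight in the variable `t = (1 - x) / 2`. -/
noncomputable def betaFunctional (ha : -1 < a) (hb : -1 < b) : ℝ[X] →ₗ[ℝ] ℝ where
  toFun p := ∫ t in (0 : ℝ)..1, p.eval t * (t ^ a * (1 - t) ^ b)
  map_add' p q := by
    simp only [eval_add, add_mul]
    exact intervalIntegral.integral_add (intervalIntegrable_eval_mul_rpow ha hb p)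
      (intervalIntegrable_eval_mul_rpow ha hb q)
  map_smul' c p := by
    simp only [eval_smul, smul_eq_mul, mul_assoc, intervalIntegral.integral_const_mul,
      RingHom.id_apply]

theorem betaFunctional_X_pow_mul_one_sub_X_pow (ha : -1 < a) (hb : -1 < b) (m l : ℕ) :
    betaFunctional ha hb (X ^ m * (1 - X) ^ l) =
      Real.Gamma (m + a + 1) * Real.Gamma (l + b + 1) / Real.Gamma (m + l + a + b + 2) := by
  calc betaFunctional ha hb (X ^ m * (1 - X) ^ l)
      = ∫ t in (0 : ℝ)..1, t ^ (m + a) * (1 - t) ^ (l + b) := by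
        refine intervalIntegral.integral_congr_Ioo_of_le zero_le_one fun t ht => ?_
        simp only [eval_mul, eval_pow, eval_X, eval_sub, eval_one]
        rw [Real.rpow_add ht.1, Real.rpow_add (sub_pos.2 ht.2), Real.rpow_natCast,
          Real.rpow_natCast]
        ring
    _ = _ := by
        rw [integral_rpow_mul_one_sub_rpow (by linarith) (by linarith)]
        congr 2
        ring

end BetaIntegral

section JacobiNorm

variable {α β : ℝ}

/-- The Jacobi polynomial in the variable `t = (1 - x) / 2`, that is, `P_n^{(α,β)}(1 - 2 t)`. -/
noncomputable def shiftedJacobiP (α β : ℝ) (n : ℕ) : ℝ[X] :=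
  aeval (1 - 2 * X : ℝ[X]) (jacobiP α β n)

theorem eval_shiftedJacobiP (n : ℕ) (t : ℝ) :
    (shiftedJacobiP α β n).eval t = (jacobiP α β n).eval (1 - 2 * t) := by
  rw [shiftedJacobiP, ← comp_eq_aeval, eval_comp]
  simp only [eval_sub, eval_one, eval_mul, eval_ofNat, eval_X]

theorem natDegree_shiftedJacobiP_le (n : ℕ) : (shiftedJacobiP α β n).natDegree ≤ n := by
  have hdeg : ∀ d : ℕ, ((1 - X : ℝ[X]) ^ d).natDegree ≤ d * 1 := fun d =>
    natDegree_pow_le_of_le d (by compute_degree)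
  rw [shiftedJacobiP, aeval_one_sub_two_mul_jacobiP]
  refine natDegree_sum_le_of_forall_le _ _ fun k hk => (natDegree_smul_le _ _).trans ?_
  calc ((-X : ℝ[X]) ^ k * (1 - X) ^ (n - k)).natDegree
      ≤ k * 1 + (n - k) * 1 :=
        natDegree_mul_le_of_le (natDegree_pow_le_of_le k (by compute_degree)) (hdeg _)
    _ = n := by rw [mul_one, mul_one, Nat.add_sub_cancel' (Finset.mem_range_succ_iff.1 hk)]

theorem coeff_shiftedJacobiP (n : ℕ) :
    (shiftedJacobiP α β n).coeff n =
      (-1) ^ n * ∑ k ∈ Finset.range (n + 1), jacobiCoeff α β n k := by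
  rw [shiftedJacobiP, aeval_one_sub_two_mul_jacobiP, finsetSum_coeff, Finset.mul_sum]
  refine Finset.sum_congr rfl fun k hk => ?_
  obtain ⟨d, rfl⟩ := Nat.exists_eq_add_of_le (Finset.mem_range_succ_iff.1 hk)
  have hdeg : (1 - X : ℝ[X]).natDegree ≤ 1 := by compute_degree
  have hcoeff : ((1 - X : ℝ[X]) ^ d).coeff d = (-1) ^ d := by
    have := coeff_pow_of_natDegree_le hdeg (m := d)
    simpa [coeff_one] using this
  rw [Nat.add_sub_cancel_left, neg_pow, coeff_smul, mul_assoc, ← C_1, ← C_neg, ← C_pow, coeff_C_mul,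
    coeff_X_pow_mul', if_pos (Nat.le_add_right k d), Nat.add_sub_cancel_left, C_1, hcoeff, pow_add,
    smul_eq_mul]
  ring

-- The `k`-th Beta moment contributes the value at `k` of `(x + α + 1)_m`, of degree `m`, so the sum
-- over `k` is an `n`-th finite difference of that polynomial.
theorem betaFunctional_X_pow_mul_shiftedJacobiP (hα : -1 < α) (hβ : -1 < β) {m n : ℕ} (hm : m ≤ n) :
    betaFunctional hα hβ (X ^ m * shiftedJacobiP α β n) =
      Real.Gamma (n + α + 1) * Real.Gamma (n + β + 1) / Real.Gamma (m + n + α + β + 2) *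
        ((-1) ^ n * ((ascPochhammer ℝ m).comp (X + C (α + 1))).coeff n) := by
  have hdeg : ((ascPochhammer ℝ m).comp (X + C (α + 1))).natDegree ≤ n := by
    rwa [natDegree_comp, natDegree_X_add_C, mul_one, ascPochhammer_natDegree]
  rw [← sum_neg_one_pow_div_factorial_mul_eval hdeg, shiftedJacobiP, aeval_one_sub_two_mul_jacobiP,
    Finset.mul_sum, Finset.mul_sum, map_sum]
  refine Finset.sum_congr rfl fun k hk => ?_
  have hk' : k ≤ n := Finset.mem_range_succ_iff.1 hk
  have hαk : 0 < α + k + 1 := by linarith [k.cast_nonneg (α := ℝ)]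
  have hΓα := (Real.Gamma_pos_of_pos hαk).ne'
  have hΓβ := (Real.Gamma_pos_of_pos
    (show 0 < (n : ℝ) - k + β + 1 by linarith [(Nat.cast_le (α := ℝ)).2 hk'])).ne'
  have hmonomial : (X ^ m * jacobiCoeff α β n k • ((-X) ^ k * (1 - X) ^ (n - k)) : ℝ[X]) =
      (jacobiCoeff α β n k * (-1) ^ k) • (X ^ (m + k) * (1 - X) ^ (n - k)) := by
    rw [neg_pow (X : ℝ[X]), smul_eq_C_mul, smul_eq_C_mul, C_mul, C_pow, C_neg, C_1]
    ring
  have hΓasc : Real.Gamma (m + k + α + 1) =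
      (ascPochhammer ℝ m).eval (k + (α + 1)) * Real.Gamma (α + k + 1) := by
    rw [show (k : ℝ) + (α + 1) = α + k + 1 by ring, ← realGamma_add_natCast hαk]
    congr 1
    ring
  have hfact : (n - k : ℕ).factorial = Real.Gamma (n - k + 1) := by
    rw [← Nat.cast_sub hk', Real.Gamma_nat_eq_factorial]
  have hfact_ne : Real.Gamma ((n : ℝ) - k + 1) ≠ 0 := by rw [← hfact]; positivity
  rw [hmonomial, map_smul, betaFunctional_X_pow_mul_one_sub_X_pow, eval_comp, jacobiCoeff, hfact]
  simp only [eval_add, eval_X, eval_C, smul_eq_mul]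
  push_cast [hk']
  rw [hΓasc, Real.Gamma_nat_eq_factorial,
    show (m : ℝ) + k + (n - k) + α + β + 2 = m + n + α + β + 2 by ring]
  field_simp

theorem betaFunctional_mul_shiftedJacobiP (hα : -1 < α) (hβ : -1 < β) {n : ℕ} {q : ℝ[X]}
    (hq : q.natDegree ≤ n) :
    betaFunctional hα hβ (q * shiftedJacobiP α β n) =
      q.coeff n * ((-1) ^ n *
        (Real.Gamma (n + α + 1) * Real.Gamma (n + β + 1) / Real.Gamma (2 * n + α + β + 2))) := by
  have orthogonal : ∀ m < n, betaFunctional hα hβ (X ^ m * shiftedJacobiP α β n) = 0 :=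
    fun m hm => by
      rw [betaFunctional_X_pow_mul_shiftedJacobiP hα hβ hm.le, coeff_eq_zero_of_natDegree_lt,
        mul_zero, mul_zero]
      rwa [natDegree_comp, natDegree_X_add_C, mul_one, ascPochhammer_natDegree]
  have monic : ((ascPochhammer ℝ n).comp (X + C (α + 1))).coeff n = 1 := by
    have h := ((monic_ascPochhammer ℝ n).comp_X_add_C (α + 1)).coeff_natDegree
    rwa [natDegree_comp, natDegree_X_add_C, mul_one, ascPochhammer_natDegree] at h
  conv_lhs => rw [q.as_sum_range_C_mul_X_pow' (Nat.lt_succ_of_le hq)]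
  rw [Finset.sum_mul, map_sum, Finset.sum_range_succ, Finset.sum_eq_zero fun m hm => ?_, zero_add]
  · rw [mul_assoc, ← smul_eq_C_mul, map_smul, betaFunctional_X_pow_mul_shiftedJacobiP hα hβ le_rfl,
      monic, ← two_mul, smul_eq_mul]
    ring
  · rw [mul_assoc, ← smul_eq_C_mul, map_smul, orthogonal m (Finset.mem_range.1 hm), smul_zero]

theorem jacobiNormSq_eq_betaFunctional (hα : -1 < α) (hβ : -1 < β) (n : ℕ) :
    jacobiNormSq α β n =
      2 ^ (α + β + 1) * betaFunctional hα hβ (shiftedJacobiP α β n * shiftedJacobiP α β n) := by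
  have hsubst := intervalIntegral.integral_comp_sub_mul (a := 0) (b := 1) (c := (2 : ℝ))
    (fun x : ℝ => (jacobiP α β n).eval x ^ 2 * (1 - x) ^ α * (1 + x) ^ β) two_ne_zero 1
  rw [mul_one, mul_zero, sub_zero, show (1 : ℝ) - 2 = -1 by norm_num, ← jacobiNormSq.eq_def,
    eq_inv_smul_iff₀ two_ne_zero, smul_eq_mul] at hsubst
  rw [← hsubst, Real.rpow_add_one two_ne_zero, Real.rpow_add two_pos, mul_comm (_ * _) (2 : ℝ),
    mul_assoc]
  congr 1
  simp only [betaFunctional, LinearMap.coe_mk, AddHom.coe_mk]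
  rw [← intervalIntegral.integral_const_mul]
  refine intervalIntegral.integral_congr fun t ht => ?_
  rw [Set.uIcc_of_le zero_le_one] at ht
  simp only [eval_mul, eval_shiftedJacobiP]
  rw [show 1 - (1 - 2 * t) = 2 * t by ring, show 1 + (1 - 2 * t) = 2 * (1 - t) by ring,
    Real.mul_rpow zero_le_two ht.1, Real.mul_rpow zero_le_two (sub_nonneg.2 ht.2)]
  ring

theorem jacobiNormSq_eq (hα : -1 < α) (hβ : -1 < β) {n : ℕ} (hn : 1 ≤ n) :
    jacobiNormSq α β n = 2 ^ (α + β + 1) / (2 * n + α + β + 1) *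
      (Real.Gamma (n + α + 1) * Real.Gamma (n + β + 1) /
        (n.factorial * Real.Gamma (n + α + β + 1))) := by
  have hn' : (1 : ℝ) ≤ n := by exact_mod_cast hn
  have hpos : 0 < 2 * (n : ℝ) + α + β + 1 := by linarith
  have hΓ := (Real.Gamma_pos_of_pos hpos).ne'
  have hΓ' : Real.Gamma (2 * n + α + β + 2) =
      (2 * n + α + β + 1) * Real.Gamma (2 * n + α + β + 1) := by
    rw [← Real.Gamma_add_one hpos.ne']
    congr 1
    ring
  rw [jacobiNormSq_eq_betaFunctional hα hβ,
    betaFunctional_mul_shiftedJacobiP hα hβ (natDegree_shiftedJacobiP_le n), coeff_shiftedJacobiP,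
    sum_range_jacobiCoeff hα hβ hn, hΓ', mul_mul_mul_comm, ← mul_pow, neg_one_mul, neg_neg, one_pow]
  field_simp

theorem isEquivalent_jacobiNormSq (hα : -1 < α) (hβ : -1 < β) :
    Asymptotics.IsEquivalent atTop (jacobiNormSq α β) fun n => 2 ^ (α + β) / (n : ℝ) := by
  have hden : Asymptotics.IsEquivalent atTop (fun n : ℕ => 2 * (n : ℝ) + α + β + 1)
      fun n => 2 * (n : ℝ) := by
    refine ((Asymptotics.IsEquivalent.refl (u := fun _ : ℕ => (2 : ℝ))).mul
      (isEquivalent_natCast_add_const ((α + β + 1) / 2))).congr_left (.of_forall fun n => ?_)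
    simp only [Pi.mul_apply]
    ring
  have hnorm := ((Asymptotics.IsEquivalent.refl (u := fun _ : ℕ => (2 : ℝ) ^ (α + β + 1))).div
      hden).mul
    (((isEquivalent_Gamma_natCast_add α).mul (isEquivalent_Gamma_natCast_add β)).div
      ((Asymptotics.IsEquivalent.refl (u := fun n : ℕ => (n.factorial : ℝ))).mul
        (isEquivalent_Gamma_natCast_add (α + β))))
  refine (hnorm.congr_left ?_).congr_right ?_
  · filter_upwards [eventually_ge_atTop 1] with n hn
    simp only [jacobiNormSq_eq hα hβ hn, Pi.mul_apply, Pi.div_apply, add_assoc]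
  · filter_upwards [eventually_gt_atTop 0] with n hn
    have hn' : (0 : ℝ) < n := by exact_mod_cast hn
    have hpow := fun s : ℝ => (Real.rpow_pos_of_pos hn' s).ne'
    have hα' := hpow α
    have hβ' := hpow β
    have hfact : (n.factorial : ℝ) ≠ 0 := by positivity
    simp only [Pi.mul_apply, Pi.div_apply, Real.rpow_add hn', Real.rpow_add_one two_ne_zero]
    field_simp

theorem exists_abs_inv_jacobiNormSq_le (hα : -1 < α) (hβ : -1 < β) :
    ∃ C, 0 < C ∧ ∀ n, |(jacobiNormSq α β n)⁻¹| ≤ C * ((n : ℝ) + 1) := by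
  have hO : (fun n => (jacobiNormSq α β n)⁻¹) =O[atTop] fun n : ℕ => (n : ℝ) ^ (1 : ℝ) := by
    refine (isEquivalent_jacobiNormSq hα hβ).inv.isBigO.trans ?_
    refine (Asymptotics.isBigO_const_mul_self ((2 : ℝ) ^ (α + β))⁻¹ (fun n : ℕ => (n : ℝ))
      atTop).congr (fun n => ?_) fun n => (Real.rpow_one _).symm
    rw [Pi.inv_apply, inv_div, div_eq_inv_mul]
  obtain ⟨C, hC, hle⟩ := exists_forall_norm_le_of_isBigO_rpow hO
  exact ⟨C, hC, fun n => by simpa only [Real.rpow_one, Real.norm_eq_abs] using hle n⟩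

end JacobiNorm

section JacobiBounds

theorem norm_one_sub_pow_sub_one_le {A : Type*} [NormedCommRing A] [NormOneClass A] (w : A)
    (m : ℕ) : ‖(1 - w) ^ m - 1‖ ≤ Real.exp (m * ‖w‖) - 1 := by
  simpa [← sub_eq_add_neg] using (Finset.range m).norm_prod_one_add_sub_one_le fun _ => -w

theorem norm_one_sub_pow_le {A : Type*} [NormedCommRing A] [NormOneClass A] (w : A) (m : ℕ) :
    ‖(1 - w) ^ m‖ ≤ Real.exp (m * ‖w‖) := by
  linarith [norm_one_sub_pow_sub_one_le w m, norm_le_norm_sub_add ((1 - w) ^ m) 1,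
    norm_one (α := A)]

theorem iteratedDeriv_aeval {𝕜 R : Type*} [NontriviallyNormedField 𝕜] [CommSemiring R] [Algebra R 𝕜]
    (p : R[X]) (j : ℕ) :
    iteratedDeriv j (fun x : 𝕜 => aeval x p) = fun x => aeval x (derivative^[j] p) := by
  induction j with
  | zero => simp
  | succ j ih =>
    rw [iteratedDeriv_succ, ih, Function.iterate_succ_apply']
    exact funext fun x => Polynomial.deriv_aeval _

variable {α β : ℝ}

theorem exists_norm_jacobiCoeff_smul_le {A : Type*} [NormedCommRing A] [NormOneClass A]
    [NormedAlgebra ℝ A] (hα : -1 < α) (hβ : -1 < β) (R : ℝ) :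
    ∃ C, 0 < C ∧ ∀ n k : ℕ, k ≤ n → ∀ w : A, ((n : ℝ) + 1) ^ 2 * ‖w‖ ≤ R →
      ‖jacobiCoeff α β n k • ((-w) ^ k * (1 - w) ^ (n - k))‖ ≤
        C * ((n : ℝ) + 1) ^ α * (((1 + |β|) * R) ^ k / k.factorial) := by
  obtain ⟨C, hC, hcoeff⟩ := exists_abs_jacobiCoeff_le hα hβ
  refine ⟨C * Real.exp R, by positivity, fun n k hk w hw => ?_⟩
  have hnk : ((n - k : ℕ) : ℝ) ≤ (n + 1) ^ 2 := by
    have : ((n - k : ℕ) : ℝ) ≤ n := by exact_mod_cast n.sub_le k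
    nlinarith [n.cast_nonneg (α := ℝ)]
  have hexp : ‖(1 - w) ^ (n - k)‖ ≤ Real.exp R :=
    (norm_one_sub_pow_le w _).trans (Real.exp_le_exp.2 (le_trans (by gcongr) hw))
  calc ‖jacobiCoeff α β n k • ((-w) ^ k * (1 - w) ^ (n - k))‖
      ≤ |jacobiCoeff α β n k| * (‖(-w) ^ k‖ * ‖(1 - w) ^ (n - k)‖) := by
        rw [norm_smul, Real.norm_eq_abs]
        gcongr
        exact norm_mul_le _ _
    _ ≤ C * ((n : ℝ) + 1) ^ α * (((1 + |β|) * ((n : ℝ) + 1) ^ 2) ^ k / k.factorial) *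
          (‖w‖ ^ k * Real.exp R) := by
        gcongr
        · exact hcoeff n k hk
        · exact norm_neg w ▸ norm_pow_le (-w) k
    _ = C * Real.exp R * ((n : ℝ) + 1) ^ α *
          (((1 + |β|) * (((n : ℝ) + 1) ^ 2 * ‖w‖)) ^ k / k.factorial) := by
        simp only [mul_pow]
        ring
    _ ≤ _ := by gcongr

theorem exists_norm_aeval_jacobiP_le {A : Type*} [NormedCommRing A] [NormOneClass A]
    [NormedAlgebra ℝ A] (hα : -1 < α) (hβ : -1 < β) (R : ℝ) :
    ∃ C, 0 < C ∧ ∀ (n : ℕ) (w : A), ((n : ℝ) + 1) ^ 2 * ‖w‖ ≤ R →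
      ‖aeval (1 - 2 * w) (jacobiP α β n)‖ ≤ C * ((n : ℝ) + 1) ^ α := by
  obtain ⟨C, hC, hterm⟩ := exists_norm_jacobiCoeff_smul_le (A := A) hα hβ R
  refine ⟨C * Real.exp ((1 + |β|) * R), by positivity, fun n w hw => ?_⟩
  have hR : 0 ≤ R := le_trans (by positivity) hw
  rw [aeval_one_sub_two_mul_jacobiP]
  calc ‖∑ k ∈ Finset.range (n + 1), jacobiCoeff α β n k • ((-w) ^ k * (1 - w) ^ (n - k))‖
      ≤ ∑ k ∈ Finset.range (n + 1), C * ((n : ℝ) + 1) ^ α * (((1 + |β|) * R) ^ k / k.factorial) :=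
        norm_sum_le_of_le _ fun k hk => hterm n k (Finset.mem_range_succ_iff.1 hk) w hw
    _ ≤ C * ((n : ℝ) + 1) ^ α * Real.exp ((1 + |β|) * R) := by
        rw [← Finset.mul_sum]
        gcongr
        exact Real.sum_le_exp_of_nonneg (by positivity) _
    _ = _ := by ring

theorem exists_abs_eval_one_iterate_derivative_jacobiP_le (hα : -1 < α) (hβ : -1 < β) (j : ℕ) :
    ∃ C, 0 < C ∧ ∀ n : ℕ,
      |(derivative^[j] (jacobiP α β n)).eval 1| ≤ C * ((n : ℝ) + 1) ^ (α + 2 * j) := by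
  obtain ⟨C, hC, hle⟩ := exists_norm_aeval_jacobiP_le (A := ℂ) hα hβ 1
  refine ⟨j.factorial * C / 2 ^ j, by positivity, fun n => ?_⟩
  have hn : (0 : ℝ) < n + 1 := by positivity
  have hcauchy := Complex.norm_iteratedDeriv_le_of_forall_mem_sphere_norm_le (c := 1)
    (R := 2 / ((n : ℝ) + 1) ^ 2) (C := C * ((n : ℝ) + 1) ^ α) j (by positivity)
    (Polynomial.differentiable_aeval (𝕜 := ℂ) (jacobiP α β n)).diffContOnCl fun x hx => by
      rw [← show 1 - 2 * ((1 - x) / 2) = x by ring]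
      refine hle n _ ?_
      rw [norm_div, norm_sub_rev, mem_sphere_iff_norm.1 hx, RCLike.norm_ofNat]
      exact le_of_eq (by field_simp)
  rw [iteratedDeriv_aeval] at hcauchy
  beta_reduce at hcauchy
  rw [← map_one (algebraMap ℝ ℂ), aeval_algebraMap_apply_eq_algebraMap_eval,
    Complex.coe_algebraMap, Complex.norm_real, Real.norm_eq_abs] at hcauchy
  refine hcauchy.trans_eq ?_
  have hpow : ((n : ℝ) + 1) ^ (2 * j : ℝ) = (((n : ℝ) + 1) ^ 2) ^ j := by
    rw [Real.rpow_mul_natCast hn.le, Real.rpow_two]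
  rw [Real.rpow_add hn, hpow, div_pow]
  field_simp

end JacobiBounds

section KernelBounds

variable {α β : ℝ}

theorem exists_abs_kernK_one_one_le (hα : -1 < α) (hβ : -1 < β) (j : ℕ) :
    ∃ C, 0 < C ∧ ∀ n : ℕ, |kernK α β j j n 1 1| ≤ C * ((n : ℝ) + 1) ^ (2 * (α + 2 * j + 1)) := by
  obtain ⟨C, hC, hderiv⟩ := exists_abs_eval_one_iterate_derivative_jacobiP_le hα hβ j
  obtain ⟨H, hH, hnorm⟩ := exists_abs_inv_jacobiNormSq_le hα hβ
  have hexp : -1 < 2 * (α + 2 * j) + 1 := by linarith [j.cast_nonneg (α := ℝ)]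
  obtain ⟨S, hS, hsum⟩ := exists_sum_range_add_one_rpow_le hexp
  refine ⟨C ^ 2 * H * S, by positivity, fun n => ?_⟩
  calc |kernK α β j j n 1 1|
      ≤ ∑ i ∈ Finset.range (n + 1), C ^ 2 * H * ((i : ℝ) + 1) ^ (2 * (α + 2 * j) + 1) := by
        refine (Finset.abs_sum_le_sum_abs _ _).trans (Finset.sum_le_sum fun i _ => ?_)
        have hi : (0 : ℝ) < i + 1 := by positivity
        rw [div_eq_mul_inv, abs_mul, abs_mul]
        calc _ ≤ C * ((i : ℝ) + 1) ^ (α + 2 * j) * (C * ((i : ℝ) + 1) ^ (α + 2 * j)) *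
              (H * ((i : ℝ) + 1)) := by
              gcongr
              exacts [hderiv i, hderiv i, hnorm i]
          _ = _ := by
              rw [Real.rpow_add_one hi.ne', two_mul (α + 2 * j), Real.rpow_add hi (α + 2 * j)]
              ring
    _ ≤ C ^ 2 * H * (S * ((n : ℝ) + 1) ^ (2 * (α + 2 * j) + 1 + 1)) := by
        rw [← Finset.mul_sum, ← Nat.cast_succ]
        gcongr
        exact hsum _
    _ = _ := by
        rw [← mul_assoc]
        congr 2
        ring

theorem exists_norm_aeval_kernKPoly_le {A : Type*} [NormedCommRing A] [NormOneClass A]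
    [NormedAlgebra ℝ A] (hα : -1 < α) (hβ : -1 < β) (j : ℕ) (R : ℝ) :
    ∃ C, 0 < C ∧ ∀ (n : ℕ) (w : A), ((n : ℝ) + 1) ^ 2 * ‖w‖ ≤ R →
      ‖aeval (1 - 2 * w) (kernKPoly α β j n)‖ ≤ C * ((n : ℝ) + 1) ^ (2 * (α + j + 1)) := by
  obtain ⟨C, hC, hderiv⟩ := exists_abs_eval_one_iterate_derivative_jacobiP_le hα hβ j
  obtain ⟨H, hH, hnorm⟩ := exists_abs_inv_jacobiNormSq_le hα hβ
  obtain ⟨B, hB, hjacobi⟩ := exists_norm_aeval_jacobiP_le (A := A) hα hβ R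
  have hexp : -1 < α + 2 * j + 1 + α := by linarith [j.cast_nonneg (α := ℝ)]
  obtain ⟨S, hS, hsum⟩ := exists_sum_range_add_one_rpow_le hexp
  refine ⟨C * H * B * S, by positivity, fun n w hw => ?_⟩
  simp only [kernKPoly, map_sum, map_mul, aeval_C, ← Algebra.smul_def]
  calc ‖∑ i ∈ Finset.range (n + 1),
        ((derivative^[j] (jacobiP α β i)).eval 1 / jacobiNormSq α β i) •
          aeval (1 - 2 * w) (jacobiP α β i)‖
      ≤ ∑ i ∈ Finset.range (n + 1), C * H * B * ((i : ℝ) + 1) ^ (α + 2 * j + 1 + α) := by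
        refine norm_sum_le_of_le _ fun i hi => ?_
        have hi_pos : (0 : ℝ) < i + 1 := by positivity
        have hin : (i : ℝ) ≤ n := by exact_mod_cast Finset.mem_range_succ_iff.1 hi
        rw [norm_smul, Real.norm_eq_abs, div_eq_mul_inv, abs_mul]
        calc _ ≤ C * ((i : ℝ) + 1) ^ (α + 2 * j) * (H * ((i : ℝ) + 1)) *
              (B * ((i : ℝ) + 1) ^ α) := by
              gcongr
              exacts [hderiv i, hnorm i, hjacobi i w (le_trans (by gcongr) hw)]
          _ = _ := by
              rw [Real.rpow_add hi_pos _ α, Real.rpow_add_one hi_pos.ne']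
              ring
    _ ≤ C * H * B * (S * ((n : ℝ) + 1) ^ (α + 2 * j + 1 + α + 1)) := by
        rw [← Finset.mul_sum, ← Nat.cast_succ]
        gcongr
        exact hsum _
    _ = _ := by
        rw [← mul_assoc]
        congr 2
        ring

end KernelBounds

section MehlerHeine

theorem besselG_eq_tsum (ν : ℝ) (z : ℂ) :
    besselG ν z =
      ∑' k : ℕ, (1 / (k.factorial * Real.Gamma (ν + k + 1))) • (-(z / 2) ^ 2) ^ k := by
  refine tsum_congr fun k => ?_
  rw [show (k : ℂ) + ν + 1 = ((ν + k + 1 : ℝ) : ℂ) by push_cast; ring, Complex.Gamma_ofReal,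
    Complex.real_smul, neg_pow, pow_mul]
  generalize z / 2 = u
  push_cast
  ring

variable {ι : Type*} {l : Filter ι} {N : ι → ℕ} {w : ι → ℂ} {c z : ℂ} {α β : ℝ}

theorem exists_eventually_add_one_sq_mul_norm_le (hN : Tendsto N l atTop)
    (hw : Tendsto (fun i => (N i : ℂ) ^ 2 * w i) l (𝓝 c)) :
    ∃ R, ∀ᶠ i in l, ((N i : ℝ) + 1) ^ 2 * ‖w i‖ ≤ R := by
  refine ⟨4 * (‖c‖ + 1), ?_⟩
  filter_upwards [hN.eventually_ge_atTop 1, hw.norm.eventually_le_const (lt_add_one ‖c‖)]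
    with i hi hle
  have hi' : (1 : ℝ) ≤ N i := by exact_mod_cast hi
  rw [norm_mul, norm_pow, Complex.norm_natCast] at hle
  calc ((N i : ℝ) + 1) ^ 2 * ‖w i‖ ≤ (2 * N i) ^ 2 * ‖w i‖ := by gcongr; linarith
    _ = 4 * ((N i : ℝ) ^ 2 * ‖w i‖) := by ring
    _ ≤ 4 * (‖c‖ + 1) := by gcongr

theorem tendsto_one_sub_pow_natSub (hN : Tendsto N l atTop)
    (hw : Tendsto (fun i => (N i : ℂ) ^ 2 * w i) l (𝓝 c)) (k : ℕ) :
    Tendsto (fun i => (1 - w i) ^ (N i - k)) l (𝓝 1) := by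
  have hNw : Tendsto (fun i => (N i : ℝ) * ‖w i‖) l (𝓝 0) := by
    refine (hw.norm.div_atTop (tendsto_natCast_atTop_atTop.comp hN)).congr fun i => ?_
    rw [norm_mul, norm_pow, Complex.norm_natCast, Function.comp_apply, sq, mul_assoc]
    rcases eq_or_ne (N i : ℝ) 0 with h0 | h0
    · simp [h0]
    · rw [mul_div_cancel_left₀ _ h0]
  have hexp : Tendsto (fun i => Real.exp (N i * ‖w i‖) - 1) l (𝓝 0) := by
    simpa using ((Real.continuous_exp.tendsto 0).comp hNw).sub_const 1
  refine tendsto_iff_norm_sub_tendsto_zero.2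
    (squeeze_zero (fun _ => norm_nonneg _) (fun i => ?_) hexp)
  refine (norm_one_sub_pow_sub_one_le _ _).trans ?_
  gcongr
  exact Nat.sub_le _ _

theorem tendsto_jacobiCoeff_smul_div_rpow (hN : Tendsto N l atTop)
    (hw : Tendsto (fun i => (N i : ℂ) ^ 2 * w i) l (𝓝 c)) (k : ℕ) :
    Tendsto (fun i => jacobiCoeff α β (N i) k • ((-w i) ^ k * (1 - w i) ^ (N i - k)) /
      (((N i : ℝ) ^ α : ℝ) : ℂ)) l
      (𝓝 ((1 / (k.factorial * Real.Gamma (α + k + 1))) • (-c) ^ k)) := by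
  have hlim := ((tendsto_jacobiCoeff_div_rpow α β k).comp hN).smul
    ((hw.neg.pow k).mul (tendsto_one_sub_pow_natSub hN hw k))
  rw [mul_one] at hlim
  refine hlim.congr' ?_
  filter_upwards [hN.eventually_gt_atTop 0] with i hi
  have hi' : (0 : ℝ) < N i := by exact_mod_cast hi
  have hpow : (((N i : ℝ) ^ α : ℝ) : ℂ) ≠ 0 :=
    Complex.ofReal_ne_zero.2 (Real.rpow_pos_of_pos hi' α).ne'
  have hi0 : (N i : ℂ) ≠ 0 := by exact_mod_cast hi.ne'
  simp only [Function.comp_apply, Complex.real_smul, Complex.ofReal_div, Real.rpow_add hi',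
    Complex.ofReal_mul, Real.rpow_mul_natCast hi'.le, Real.rpow_two, Complex.ofReal_pow,
    Complex.ofReal_natCast, ← mul_neg, mul_pow]
  field_simp

theorem tendsto_aeval_jacobiP_div_rpow (hα : -1 < α) (hβ : -1 < β) (hN : Tendsto N l atTop)
    (hw : Tendsto (fun i => (N i : ℂ) ^ 2 * w i) l (𝓝 ((z / 2) ^ 2))) :
    Tendsto (fun i => aeval (1 - 2 * w i) (jacobiP α β (N i)) / (((N i : ℝ) ^ α : ℝ) : ℂ)) l
      (𝓝 (besselG α z)) := by
  obtain ⟨R, hR⟩ := exists_eventually_add_one_sq_mul_norm_le hN hw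
  obtain ⟨A, hA, hterm⟩ := exists_norm_jacobiCoeff_smul_le (A := ℂ) hα hβ R
  obtain ⟨B, hB, hratio⟩ := (isEquivalent_natCast_add_one_rpow α).isBigO.exists_pos
  let term (i : ι) (k : ℕ) : ℂ :=
    jacobiCoeff α β (N i) k • ((-w i) ^ k * (1 - w i) ^ (N i - k)) / (((N i : ℝ) ^ α : ℝ) : ℂ)
  have hsum : ∀ i, aeval (1 - 2 * w i) (jacobiP α β (N i)) / (((N i : ℝ) ^ α : ℝ) : ℂ) =
      ∑' k, if k ∈ Finset.range (N i + 1) then term i k else 0 := fun i => by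
    rw [aeval_one_sub_two_mul_jacobiP, Finset.sum_div, tsum_eq_sum fun k hk => if_neg hk]
    exact Finset.sum_congr rfl fun k hk => (if_pos hk).symm
  simp only [hsum, besselG_eq_tsum]
  refine tendsto_tsum_of_dominated_convergence
    (bound := fun k => A * B * (((1 + |β|) * R) ^ k / k.factorial))
    ((Real.summable_pow_div_factorial _).mul_left _) (fun k => ?_) ?_
  · refine (tendsto_jacobiCoeff_smul_div_rpow (β := β) hN hw k).congr' ?_
    filter_upwards [hN.eventually_ge_atTop k] with i hi
    rw [if_pos (Finset.mem_range_succ_iff.2 hi)]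
  · filter_upwards [hR, hN.eventually hratio.bound, hN.eventually_gt_atTop 0] with i hi hBi hi0 k
    have hi0' : (0 : ℝ) < N i := by exact_mod_cast hi0
    have hR0 : 0 ≤ R := le_trans (by positivity) hi
    have hpow := Real.rpow_pos_of_pos hi0' α
    have hpow1 : 0 < ((N i : ℝ) + 1) ^ α := by positivity
    rw [Real.norm_of_nonneg hpow1.le, Real.norm_of_nonneg hpow.le] at hBi
    split_ifs with hk
    · rw [norm_div, Complex.norm_real, Real.norm_of_nonneg hpow.le, div_le_iff₀ hpow]
      calc _ ≤ A * ((N i : ℝ) + 1) ^ α * (((1 + |β|) * R) ^ k / k.factorial) :=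
            hterm _ k (Finset.mem_range_succ_iff.1 hk) _ hi
        _ ≤ A * (B * (N i : ℝ) ^ α) * (((1 + |β|) * R) ^ k / k.factorial) := by gcongr
        _ = _ := by ring
    · rw [norm_zero]
      positivity

end MehlerHeine

section SobolevMehlerHeine

variable {α β : ℝ} {j : ℕ} {Ms : ℕ → ℝ}

theorem tendsto_mul_kernK_one_one (hα : -1 < α) (hβ : -1 < β)
    (hMs : Tendsto (fun n : ℕ => Ms n * (n : ℝ) ^ (2 * (α + 2 * j + 1))) atTop (𝓝 0)) :
    Tendsto (fun n => Ms n * kernK α β j j (n - 1) 1 1) atTop (𝓝 0) := by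
  obtain ⟨C, -, hC⟩ := exists_abs_kernK_one_one_le hα hβ j
  have hO : (fun n => kernK α β j j (n - 1) 1 1) =O[atTop]
      fun n : ℕ => (n : ℝ) ^ (2 * (α + 2 * j + 1)) := by
    refine .of_bound C ?_
    filter_upwards [eventually_ge_atTop 1] with n hn
    have h := hC (n - 1)
    rw [Nat.cast_pred hn, sub_add_cancel] at h
    rwa [Real.norm_eq_abs, Real.norm_of_nonneg (by positivity)]
  exact ((Asymptotics.isBigO_refl Ms atTop).mul hO).trans_tendsto hMs

theorem isBigO_sobQ_coeff (hα : -1 < α) (hβ : -1 < β)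
    (hMs : Tendsto (fun n : ℕ => Ms n * (n : ℝ) ^ (2 * (α + 2 * j + 1))) atTop (𝓝 0)) :
    (fun n => Ms n * (derivative^[j] (jacobiP α β n)).eval 1 /
      (1 + Ms n * kernK α β j j (n - 1) 1 1)) =O[atTop]
      fun n : ℕ => Ms n * (n : ℝ) ^ (α + 2 * j) := by
  obtain ⟨C, -, hC⟩ := exists_abs_eval_one_iterate_derivative_jacobiP_le hα hβ j
  have hderiv : (fun n => (derivative^[j] (jacobiP α β n)).eval 1) =O[atTop]
      fun n : ℕ => (n : ℝ) ^ (α + 2 * j) := by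
    refine (Asymptotics.IsBigO.of_bound C (.of_forall fun n => ?_)).trans
      (isEquivalent_natCast_add_one_rpow _).isBigO
    rw [Real.norm_eq_abs, Real.norm_of_nonneg (by positivity)]
    exact hC n
  have hden : Tendsto (fun n => (1 + Ms n * kernK α β j j (n - 1) 1 1)⁻¹) atTop (𝓝 1) := by
    simpa using ((tendsto_mul_kernK_one_one hα hβ hMs).const_add 1).inv₀ (by norm_num)
  simpa only [div_eq_mul_inv, mul_one] using
    ((Asymptotics.isBigO_refl Ms atTop).mul hderiv).mul (hden.isBigO_one ℝ)

variable {ι : Type*} {l : Filter ι} {N : ι → ℕ} {w : ι → ℂ} {c z : ℂ}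

theorem isBigO_aeval_kernKPoly (hα : -1 < α) (hβ : -1 < β) (j : ℕ) (hN : Tendsto N l atTop)
    (hw : Tendsto (fun i => (N i : ℂ) ^ 2 * w i) l (𝓝 c)) :
    (fun i => aeval (1 - 2 * w i) (kernKPoly α β j (N i - 1))) =O[l]
      fun i => (N i : ℝ) ^ (2 * (α + j + 1)) := by
  obtain ⟨R, hR⟩ := exists_eventually_add_one_sq_mul_norm_le hN hw
  obtain ⟨C, -, hC⟩ := exists_norm_aeval_kernKPoly_le (A := ℂ) hα hβ j R
  refine .of_bound C ?_
  filter_upwards [hR, hN.eventually_ge_atTop 1] with i hi hNi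
  have hle : ((N i : ℝ)) ^ 2 * ‖w i‖ ≤ R := le_trans (by gcongr; linarith) hi
  have h := hC (N i - 1) (w i)
  rw [Nat.cast_pred hNi, sub_add_cancel] at h
  rw [Real.norm_of_nonneg (by positivity)]
  exact h hle

theorem tendsto_aeval_sobQ_div_rpow (hα : -1 < α) (hβ : -1 < β)
    (hMs : Tendsto (fun n : ℕ => Ms n * (n : ℝ) ^ (2 * (α + 2 * j + 1))) atTop (𝓝 0))
    (hN : Tendsto N l atTop)
    (hw : Tendsto (fun i => (N i : ℂ) ^ 2 * w i) l (𝓝 ((z / 2) ^ 2))) :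
    Tendsto (fun i => aeval (1 - 2 * w i) (sobQ α β j Ms (N i)) / (((N i : ℝ) ^ α : ℝ) : ℂ)) l
      (𝓝 (besselG α z)) := by
  have hjacobi := tendsto_aeval_jacobiP_div_rpow hα hβ hN hw
  have hcorr := ((((isBigO_sobQ_coeff hα hβ hMs).comp_tendsto hN).smul
    (isBigO_aeval_kernKPoly hα hβ j hN hw)).mul
    (Asymptotics.isBigO_refl (fun i => (((N i : ℝ) ^ α : ℝ) : ℂ)⁻¹) l).norm_right).trans_tendsto
    ((hMs.comp hN).congr' ?_)
  · simpa only [sobQ, map_sub, map_mul, aeval_C, Algebra.smul_def, sub_mul, sub_zero,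
      div_eq_mul_inv, Function.comp_apply] using hjacobi.sub hcorr
  · filter_upwards [hN.eventually_gt_atTop 0] with i hi
    have hi' : (0 : ℝ) < N i := by exact_mod_cast hi
    have hpow := Real.rpow_pos_of_pos hi' α
    rw [norm_inv, Complex.norm_real, Real.norm_of_nonneg hpow.le, ← Real.rpow_neg hi'.le]
    simp only [Function.comp_apply, smul_eq_mul, mul_assoc, ← Real.rpow_add hi']
    congr 2
    ring

end SobolevMehlerHeine

theorem sobQ_mehlerHeine_large_gamma_general (α β : ℝ) (hα : -1 < α) (hβ : -1 < β) (j : ℕ)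
    (Ms : ℕ → ℝ)
    (hMs : Tendsto (fun n : ℕ => Ms n * (n : ℝ) ^ (2 * (α + 2 * j + 1))) atTop (𝓝 0)) :
    TendstoLocallyUniformly
      (fun (n : ℕ) (z : ℂ) =>
        aeval (1 - z ^ 2 / (2 * (n : ℂ) ^ 2)) (sobQ α β j Ms n) / (((n : ℝ) ^ α : ℝ) : ℂ))
      (besselG α) atTop := by
  refine tendstoLocallyUniformly_of_forall_tendsto_prod_nhds fun z => ?_
  have hw : Tendsto (fun q : ℕ × ℂ => (q.1 : ℂ) ^ 2 * ((q.2 / 2) ^ 2 / (q.1 : ℂ) ^ 2))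
      (atTop ×ˢ 𝓝 z) (𝓝 ((z / 2) ^ 2)) := by
    refine ((tendsto_snd.div_const 2).pow 2).congr' ?_
    filter_upwards [tendsto_fst.eventually_gt_atTop 0] with q hq
    rw [mul_div_cancel₀]
    exact pow_ne_zero 2 (Nat.cast_ne_zero.2 hq.ne')
  refine (tendsto_aeval_sobQ_div_rpow hα hβ hMs tendsto_fst hw).congr fun q => ?_
  congr 3
  ring

/-- Mehler–Heine formula for `Q_n` when `γ > 2(α+2j+1)`. -/
theorem sobQ_mehlerHeine_large_gamma (α β : ℝ) (hα : -1 < α) (hβ : -1 < β) (j : ℕ)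
    (γ M : ℝ) (hM : 0 < M) (Ms : ℕ → ℝ) (hMs : ∀ n, 0 ≤ Ms n)
    (hlim : Filter.Tendsto (fun n : ℕ => Ms n * (n : ℝ) ^ γ) Filter.atTop (nhds M))
    (hγ : 2 * (α + 2 * j + 1) < γ) (K : Set ℂ) (hK : IsCompact K) :
    TendstoUniformlyOn
      (fun (n : ℕ) (z : ℂ) =>
        Polynomial.aeval (1 - z ^ 2 / (2 * (n : ℂ) ^ 2)) (sobQ α β j Ms n) /
          (((n : ℝ) ^ α : ℝ) : ℂ))
      (fun z => besselG α z) Filter.atTop K :=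
  tendstoLocallyUniformly_iff_forall_isCompact.1 (sobQ_mehlerHeine_large_gamma_general α β hα hβ j
    Ms (tendsto_mul_rpow_of_lt hlim hγ)) K hK
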